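/- Every strongly entanglement breaking quantum operation Φ : T(H1) → T(H2) between trace-class operators on separable Hilbert spaces is anti-degradable; in fact there exist a quantum operation Ψ complementary to Φ and a quantum channel Γ with Γ∘Ψ = Φ, so that Γ∘Ψ is complementary to Ψ, i.e., Ψ is degradable. -/

import Mathlib

/-!
A strongly entanglement breaking operation `Φ` measures and prepares:
`Φ(T) = Σ_m ⟪w m, T (w m)⟫ |v m⟩⟨v m|` with unit vectors `v m` and `Σ_m |w m⟩⟨w m|` bounded (`IsSEB.exists_structure`). To
see this, apply `id ⊗ Φ` to the pure state of a vector `Ω = Σ_i l i • f i ⊗ e i` with `l i > 0`,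
where `e` is a basis of `H1` and `f` the standard basis of an `ℓ²` space. The result is a sum of
nonnegative multiples of projections onto product vectors `a m ⊗ v m`. Comparing matrix elements
with a Kraus form `A` of `Φ` shows that the map on matrix units `|e i⟩⟨e k|` is given by the
measure-and-prepare expression with `⟪w m, e i⟫ = ⟪f i, a m⟫ / l i`. Such bounded functionals
`⟪w m, ·⟫` exist because the columns `(⟪f i, a m⟫ / l i)_m` have the same Gram matrix as the vectors
`(A j (e i))_j`, so they depend boundedly on `e i` (`BesselBound.exists_vectors`). Equality on
matrix units extends to trace-class operators by duality (`BesselBound.hasSum_kraus_of_eq`).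

From the measure-and-prepare form, the operator `A h = Σ_m ⟪w m, h⟫ v m ⊗ δ m`, with `δ` the standard
basis of `ℓ²(M)`, dilates `Φ`. Its other partial trace `Ψ` is a complement of `Φ` with diagonal
entries `⟪δ m, Ψ(T) δ m⟫ = ⟪w m, T (w m)⟫`. The channel `Γ` that measures in the basis `δ` and
prepares `v m` therefore satisfies `Γ ∘ Ψ = Φ` (`exists_complement`).

`AntiDegradable` quantifies over all complements `Ψ₁` of `Φ` and all complements `Ψ₂` of `Ψ₁`.
Complements are unique up to conjugation with a bounded operator (`IsComplementary.exists_conj`), so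
`Ψ = P Ψ₁ P*` and `Ψ₂ = D Φ D*`; hence `X ↦ D Γ(P X P*) D*` maps `Ψ₁` to `Ψ₂`.
-/


noncomputable section

namespace PaperInf

open scoped ComplexInnerProductSpace ComplexOrder
open ContinuousLinearMap TopologicalSpace

/-- A bundled separable complex Hilbert space. -/
structure SepHilbert : Type 1 where
  carrier : Type
  [nacg : NormedAddCommGroup carrier]
  [ips : InnerProductSpace ℂ carrier]
  [cs : CompleteSpace carrier]
  [sep : SeparableSpace carrier]

attribute [instance] SepHilbert.nacg SepHilbert.ips SepHilbert.cs SepHilbert.sep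

variable {H H1 H2 H3 H4 K W W' : Type*}
  [NormedAddCommGroup H] [InnerProductSpace ℂ H] [CompleteSpace H]
  [NormedAddCommGroup H1] [InnerProductSpace ℂ H1] [CompleteSpace H1]
  [NormedAddCommGroup H2] [InnerProductSpace ℂ H2] [CompleteSpace H2]
  [NormedAddCommGroup H3] [InnerProductSpace ℂ H3] [CompleteSpace H3]
  [NormedAddCommGroup H4] [InnerProductSpace ℂ H4] [CompleteSpace H4]
  [NormedAddCommGroup K] [InnerProductSpace ℂ K] [CompleteSpace K]
  [NormedAddCommGroup W] [InnerProductSpace ℂ W] [CompleteSpace W]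
  [NormedAddCommGroup W'] [InnerProductSpace ℂ W'] [CompleteSpace W']

/-- `T` is a trace-class operator: it admits a nuclear decomposition
`T = Σ_n |x_n⟩⟨y_n|` with `Σ_n ‖x_n‖ ‖y_n‖ < ∞`. -/
def IsTraceClass (T : H →L[ℂ] H) : Prop :=
  ∃ x y : ℕ → H, Summable (fun n => ‖x n‖ * ‖y n‖) ∧
    ∀ v, HasSum (fun n => ⟪y n, v⟫ • x n) (T v)

/-- The rank-one operator `|x⟩⟨y| : H1 → H2`, `v ↦ ⟪y, v⟫ x`. -/
def ketbra (x : H2) (y : H1) : H1 →L[ℂ] H2 :=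
  (innerSL ℂ y).smulRight x

/-- The trace of an operator, computed in a (choice of) Hilbert basis.  On trace-class
operators this is the usual basis-independent trace. -/
def trace (T : H →L[ℂ] H) : ℂ :=
  ∑' i : (exists_hilbertBasis ℂ H).choose, ⟪(i : H), T (i : H)⟫

/-- `ρ` is a state: a positive trace-class operator of trace one. -/
def IsState (ρ : H →L[ℂ] H) : Prop :=
  IsTraceClass ρ ∧ ρ.IsPositive ∧ trace ρ = 1

/-- `Φ` is a quantum operation from `T(H1)` to `T(H2)`: a (trace-norm bounded linear) map whose
dual is a normal completely positive map; equivalently a map admitting a Kraus decomposition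
`Φ(T) = Σ_j A_j T A_j*` with `Σ_j A_j* A_j` convergent in the strong operator topology to a
bounded operator. -/
def IsQuantumOperation (Φ : (H1 →L[ℂ] H1) → (H2 →L[ℂ] H2)) : Prop :=
  ∃ (ι : Type) (_ : Countable ι) (A : ι → H1 →L[ℂ] H2) (S : H1 →L[ℂ] H1),
    (∀ x, HasSum (fun j => adjoint (A j) (A j x)) (S x)) ∧
    ∀ T, IsTraceClass T → HasSum (fun j => A j ∘L T ∘L adjoint (A j)) (Φ T)

/-- A quantum channel is a trace-preserving quantum operation. -/
def IsQuantumChannel (Φ : (H1 →L[ℂ] H1) → (H2 →L[ℂ] H2)) : Prop :=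
  IsQuantumOperation Φ ∧ ∀ T, IsTraceClass T → trace (Φ T) = trace T

/-- A realization of `W` as the Hilbert-space tensor product `K ⊗ H`:
a map `t : K → H → W` with `⟪t x y, t x' y'⟫ = ⟪x,x'⟫ ⟪y,y'⟫` whose range spans a
dense subspace. -/
structure TensorStruct (K H W : Type*) [NormedAddCommGroup K] [InnerProductSpace ℂ K]
    [NormedAddCommGroup H] [InnerProductSpace ℂ H]
    [NormedAddCommGroup W] [InnerProductSpace ℂ W] : Type _ where
  t : K → H → W
  inner_t : ∀ (x x' : K) (y y' : H), ⟪t x y, t x' y'⟫ = ⟪x, x'⟫ * ⟪y, y'⟫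
  dense_t : (Submodule.span ℂ {w : W | ∃ x y, w = t x y}).topologicalClosure = ⊤

/-- `P = tr_{H'}(S)`: the partial trace of `S ∈ B(W)`, `W = H ⊗ H'`, over the second factor. -/
def IsPartialTraceRight {H' : Type*} [NormedAddCommGroup H'] [InnerProductSpace ℂ H']
    (ts : TensorStruct H H' W) (S : W →L[ℂ] W) (P : H →L[ℂ] H) : Prop :=
  ∃ (ι : Type) (_ : Countable ι) (b : HilbertBasis ι ℂ H'),
    ∀ x y : H, HasSum (fun i => ⟪ts.t x (b i), S (ts.t y (b i))⟫) ⟪x, P y⟫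

/-- `P = tr_{H}(S)`: the partial trace of `S ∈ B(W)`, `W = H ⊗ H'`, over the first factor. -/
def IsPartialTraceLeft {H' : Type*} [NormedAddCommGroup H'] [InnerProductSpace ℂ H']
    (ts : TensorStruct H H' W) (S : W →L[ℂ] W) (P : H' →L[ℂ] H') : Prop :=
  ∃ (ι : Type) (_ : Countable ι) (b : HilbertBasis ι ℂ H),
    ∀ x y : H', HasSum (fun i => ⟪ts.t (b i) x, S (ts.t (b i) y)⟫) ⟪x, P y⟫

/-- The quantum operation `Ψ : T(H1) → T(H3)` is complementary to the quantum operation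
`Φ : T(H1) → T(H2)`: there is a bounded operator `A : H1 → H2 ⊗ H3` with
`Φ(T) = tr_{H3}(A T A*)` and `Ψ(T) = tr_{H2}(A T A*)` for all trace-class `T`. -/
def IsComplementary (Ψ : (H1 →L[ℂ] H1) → (H3 →L[ℂ] H3))
    (Φ : (H1 →L[ℂ] H1) → (H2 →L[ℂ] H2)) : Prop :=
  ∃ (W : SepHilbert) (ts : TensorStruct H2 H3 W.carrier) (A : H1 →L[ℂ] W.carrier),
    ∀ T, IsTraceClass T →
      IsPartialTraceRight ts (A ∘L T ∘L adjoint A) (Φ T) ∧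
      IsPartialTraceLeft ts (A ∘L T ∘L adjoint A) (Ψ T)

/-- `Φ` is degradable: there is a quantum operation `Γ` with `Γ ∘ Φ` complementary to `Φ`;
equivalently (and as formalized here), for every quantum operation `Ψ` complementary to `Φ`
there is a quantum operation `Γ` with `Γ ∘ Φ = Ψ`. -/
def Degradable (Φ : (H1 →L[ℂ] H1) → (H2 →L[ℂ] H2)) : Prop :=
  ∀ (K : SepHilbert) (Ψ : (H1 →L[ℂ] H1) → (K.carrier →L[ℂ] K.carrier)),
    IsQuantumOperation Ψ → IsComplementary Ψ Φ →
      ∃ Γ : (H2 →L[ℂ] H2) → (K.carrier →L[ℂ] K.carrier),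
        IsQuantumOperation Γ ∧ ∀ T, IsTraceClass T → Γ (Φ T) = Ψ T

/-- `Φ` is anti-degradable: some (equivalently, by the uniqueness of complements up to
partial isometries, every) quantum operation complementary to `Φ` is degradable. -/
def AntiDegradable (Φ : (H1 →L[ℂ] H1) → (H2 →L[ℂ] H2)) : Prop :=
  ∀ (K : SepHilbert) (Ψ : (H1 →L[ℂ] H1) → (K.carrier →L[ℂ] K.carrier)),
    IsQuantumOperation Ψ → IsComplementary Ψ Φ → Degradable Ψ

/-- `τ = ρ1 ⊗ ρ2` on `W = K ⊗ H`. -/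
def IsProductOp (ts : TensorStruct K H W) (ρ1 : K →L[ℂ] K) (ρ2 : H →L[ℂ] H)
    (τ : W →L[ℂ] W) : Prop :=
  ∀ (x x' : K) (y y' : H), ⟪ts.t x y, τ (ts.t x' y')⟫ = ⟪x, ρ1 x'⟫ * ⟪y, ρ2 y'⟫

/-- `ρ` (a positive trace-class operator on `W = K ⊗ H`) is countably decomposable separable:
`ρ = Σ_n p_n ρ_n^(1) ⊗ ρ_n^(2)` (trace-norm convergent) for states `ρ_n^(1)`, `ρ_n^(2)` and
nonnegative summable weights `p_n`. -/
def CDSeparable (ts : TensorStruct K H W) (ρ : W →L[ℂ] W) : Prop :=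
  ∃ (p : ℕ → ℝ) (ρ1 : ℕ → K →L[ℂ] K) (ρ2 : ℕ → H →L[ℂ] H) (τ : ℕ → W →L[ℂ] W),
    (∀ n, 0 ≤ p n) ∧ Summable p ∧
    (∀ n, IsState (ρ1 n)) ∧ (∀ n, IsState (ρ2 n)) ∧
    (∀ n, IsProductOp ts (ρ1 n) (ρ2 n) (τ n)) ∧
    HasSum (fun n => (p n : ℂ) • τ n) ρ

/-- `σ = (id_K ⊗ Φ)(ρ)`, where `ρ ∈ T(K ⊗ H1)`, `σ ∈ T(K ⊗ H2)`: for a Kraus decomposition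
`Φ = Σ_j A_j (·) A_j*` one has `σ = Σ_j (I ⊗ A_j) ρ (I ⊗ A_j)*`. -/
def IsIdTensorApply (ts : TensorStruct K H1 W) (ts' : TensorStruct K H2 W')
    (Φ : (H1 →L[ℂ] H1) → (H2 →L[ℂ] H2)) (ρ : W →L[ℂ] W) (σ : W' →L[ℂ] W') : Prop :=
  ∃ (ι : Type) (_ : Countable ι) (A : ι → H1 →L[ℂ] H2) (S : H1 →L[ℂ] H1),
    (∀ x, HasSum (fun j => adjoint (A j) (A j x)) (S x)) ∧
    (∀ T, IsTraceClass T → HasSum (fun j => A j ∘L T ∘L adjoint (A j)) (Φ T)) ∧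
    ∃ L : ι → (W →L[ℂ] W'),
      (∀ j x y, L j (ts.t x y) = ts'.t x (A j y)) ∧
      HasSum (fun j => L j ∘L ρ ∘L adjoint (L j)) σ

/-- `Φ` is strongly entanglement breaking: for every separable Hilbert space `K` and every
state `ρ` on `K ⊗ H1`, the state `(id_K ⊗ Φ)(ρ)` is countably decomposable separable. -/
def IsSEB (Φ : (H1 →L[ℂ] H1) → (H2 →L[ℂ] H2)) : Prop :=
  ∀ (K W W' : SepHilbert) (ts : TensorStruct K.carrier H1 W.carrier)
    (ts' : TensorStruct K.carrier H2 W'.carrier)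
    (ρ : W.carrier →L[ℂ] W.carrier) (σ : W'.carrier →L[ℂ] W'.carrier),
    IsState ρ → IsIdTensorApply ts ts' Φ ρ σ → CDSeparable ts' σ

/-! ### Bessel-bounded operator families and nuclear decompositions -/

section Aux

set_option linter.unusedSectionVars false

/-- The family `A` satisfies `Σ_j ‖A_j x‖² ≤ M ‖x‖²` for all `x`, i.e. all finite partial sums of
`Σ_j A_j* A_j` are bounded by `M`. This is the condition on the Kraus operators of a quantum
operation. -/
def BesselBound {ι : Type*} (A : ι → H1 →L[ℂ] H2) (M : ℝ) : Prop :=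
  0 ≤ M ∧ ∀ (x : H1) (s : Finset ι), ∑ j ∈ s, ‖A j x‖ ^ 2 ≤ M * ‖x‖ ^ 2

/-- `T = Σ_n |x_n⟩⟨y_n|` with `Σ_n ‖x_n‖ ‖y_n‖ < ∞`: the data in the definition of a trace-class
operator, with an arbitrary index type. -/
def Nuclear {κ : Type*} (x y : κ → H) (T : H →L[ℂ] H) : Prop :=
  Summable (fun n => ‖x n‖ * ‖y n‖) ∧ ∀ v, HasSum (fun n => ⟪y n, v⟫ • x n) (T v)

lemma summable_prod_of_fiber_le {κ ι : Type*} {f : κ × ι → ℝ} (hf : ∀ p, 0 ≤ f p) {g : κ → ℝ}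
    (hg : Summable g) (h : ∀ n (s : Finset ι), ∑ j ∈ s, f (n, j) ≤ g n) : Summable f := by
  rw [summable_prod_of_nonneg hf]
  have h1 : ∀ n, Summable fun j => f (n, j) := fun n =>
    summable_of_sum_le (fun j => hf _) (h n)
  refine ⟨h1, Summable.of_nonneg_of_le (fun n => tsum_nonneg fun j => hf _) (fun n => ?_) hg⟩
  exact (h1 n).tsum_le_of_sum_le (h n)

lemma BesselBound.sum_mul_le {ι : Type*} {A : ι → H1 →L[ℂ] H2} {M : ℝ} (hA : BesselBound A M)
    (x y : H1) (s : Finset ι) : ∑ j ∈ s, ‖A j x‖ * ‖A j y‖ ≤ M * (‖x‖ * ‖y‖) := by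
  refine (Real.sum_mul_le_sqrt_mul_sqrt s _ _).trans ?_
  calc √(∑ j ∈ s, ‖A j x‖ ^ 2) * √(∑ j ∈ s, ‖A j y‖ ^ 2)
      ≤ √(M * ‖x‖ ^ 2) * √(M * ‖y‖ ^ 2) := by
        gcongr
        · exact hA.2 x s
        · exact hA.2 y s
    _ = M * (‖x‖ * ‖y‖) := by
        rw [Real.sqrt_mul hA.1, Real.sqrt_mul hA.1, Real.sqrt_sq (norm_nonneg _),
          Real.sqrt_sq (norm_nonneg _)]
        linear_combination (‖x‖ * ‖y‖) * Real.mul_self_sqrt hA.1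

lemma BesselBound.summable_prod {ι κ : Type*} {A : ι → H1 →L[ℂ] H2} {M : ℝ}
    (hA : BesselBound A M) {x y : κ → H1} (h : Summable fun n => ‖x n‖ * ‖y n‖) :
    Summable fun p : κ × ι => ‖A p.2 (x p.1)‖ * ‖A p.2 (y p.1)‖ :=
  summable_prod_of_fiber_le (fun _ => by positivity) (h.mul_left M)
    fun n s => hA.sum_mul_le (x n) (y n) s

lemma BesselBound.summable_sq {ι : Type*} {A : ι → H1 →L[ℂ] H2} {M : ℝ}
    (hA : BesselBound A M) (x : H1) : Summable fun j => ‖A j x‖ ^ 2 :=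
  summable_of_sum_le (fun _ => by positivity) (hA.2 x)

/-- A Bessel-bounded family assembles into one bounded operator `x ↦ (A j x)_j` into the
`ℓ²`-direct sum. -/
lemma BesselBound.exists_row {ι : Type*} {A : ι → H1 →L[ℂ] H2} {M : ℝ} (hA : BesselBound A M) :
    ∃ R : H1 →L[ℂ] lp (fun _ : ι => H2) 2, ∀ x j, R x j = A j x := by
  have hmem : ∀ x, Memℓp (fun j => A j x) 2 := fun x => by
    refine memℓp_gen ?_
    simpa using hA.summable_sq x
  let R0 : H1 →ₗ[ℂ] lp (fun _ : ι => H2) 2 :=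
    { toFun := fun x => ⟨fun j => A j x, hmem x⟩
      map_add' := fun x y => by ext j; exact map_add (A j) x y
      map_smul' := fun c x => by ext j; exact map_smul (A j) c x }
  refine ⟨R0.mkContinuous (√M) fun x => ?_, fun x j => rfl⟩
  refine lp.norm_le_of_forall_sum_le (by norm_num) (by positivity) fun s => ?_
  have := hA.2 x s
  simp only [ENNReal.toReal_ofNat, Real.rpow_ofNat]
  rw [mul_pow, Real.sq_sqrt hA.1]
  exact this

/-- The operator `Σ_j A_j* A_j` is `R* R` with `R` the row operator of `A`. -/
lemma BesselBound.exists_hasSum {ι : Type*} {A : ι → H1 →L[ℂ] H2} {M : ℝ}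
    (hA : BesselBound A M) :
    ∃ S : H1 →L[ℂ] H1, ∀ x, HasSum (fun j => adjoint (A j) (A j x)) (S x) := by
  classical
  obtain ⟨R, hR⟩ := hA.exists_row
  refine ⟨adjoint R ∘L R, fun x => ?_⟩
  have h := (lp.hasSum_single (p := 2) (by norm_num) (R x)).mapL (adjoint R)
  refine h.congr_fun fun j => ?_
  refine ext_inner_right ℂ fun z => ?_
  rw [adjoint_inner_left, adjoint_inner_left, lp.inner_single_left, hR, hR]

lemma besselBound_of_hasSum {ι : Type*} {A : ι → H1 →L[ℂ] H2} {S : H1 →L[ℂ] H1}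
    (h : ∀ x, HasSum (fun j => adjoint (A j) (A j x)) (S x)) : BesselBound A ‖S‖ := by
  refine ⟨norm_nonneg _, fun x s => ?_⟩
  have h1 : HasSum (fun j => ‖A j x‖ ^ 2) (RCLike.re ⟪x, S x⟫) := by
    have := ((h x).mapL (innerSL ℂ x)).mapL Complex.reCLM
    refine this.congr_fun fun j => ?_
    simp [adjoint_inner_right, inner_self_eq_norm_sq_to_K, ← Complex.ofReal_pow]
  calc ∑ j ∈ s, ‖A j x‖ ^ 2 ≤ RCLike.re ⟪x, S x⟫ :=
        sum_le_hasSum s (fun _ _ => by positivity) h1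
    _ ≤ ‖x‖ * ‖S x‖ := re_inner_le_norm _ _
    _ ≤ ‖x‖ * (‖S‖ * ‖x‖) := by gcongr; exact S.le_opNorm x
    _ = ‖S‖ * ‖x‖ ^ 2 := by ring

lemma besselBound_orthonormal {ι : Type*} {e : ι → H} (he : Orthonormal ℂ e) :
    BesselBound (fun i => innerSL ℂ (e i)) 1 :=
  ⟨zero_le_one, fun x s => by
    simpa using he.sum_inner_products_le (x := x) (s := s)⟩

lemma Nuclear.conj {κ : Type*} {x y : κ → H1} {T : H1 →L[ℂ] H1} (h : Nuclear x y T)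
    (P Q : H1 →L[ℂ] H2) :
    Nuclear (fun n => P (x n)) (fun n => Q (y n)) (P ∘L T ∘L adjoint Q) := by
  refine ⟨?_, fun v => ?_⟩
  · refine Summable.of_nonneg_of_le (fun _ => by positivity) (fun n => ?_)
      (h.1.mul_left (‖P‖ * ‖Q‖))
    calc ‖P (x n)‖ * ‖Q (y n)‖ ≤ (‖P‖ * ‖x n‖) * (‖Q‖ * ‖y n‖) := by
          gcongr <;> exact le_opNorm _ _
      _ = _ := by ring
  · have := (h.2 (adjoint Q v)).mapL P
    simpa [adjoint_inner_right] using this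

lemma Nuclear.norm_le {κ : Type*} {x y : κ → H} {T : H →L[ℂ] H} (h : Nuclear x y T) :
    ‖T‖ ≤ ∑' n, ‖x n‖ * ‖y n‖ := by
  refine T.opNorm_le_bound (tsum_nonneg fun _ => by positivity) fun v => ?_
  rw [← (h.2 v).tsum_eq]
  refine tsum_of_norm_bounded (h.1.hasSum.mul_right ‖v‖) fun n => ?_
  rw [norm_smul]
  calc ‖⟪y n, v⟫‖ * ‖x n‖ ≤ (‖y n‖ * ‖v‖) * ‖x n‖ := by
        gcongr; exact norm_inner_le_norm _ _
    _ = _ := by ring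

lemma IsTraceClass.exists_nuclear {T : H →L[ℂ] H} (h : IsTraceClass T) :
    ∃ x y : ℕ → H, Nuclear x y T := h

lemma IsTraceClass.conj {T : H1 →L[ℂ] H1} (h : IsTraceClass T) (P : H1 →L[ℂ] H2) :
    IsTraceClass (P ∘L T ∘L adjoint P) := by
  obtain ⟨x, y, hxy⟩ := h
  exact ⟨_, _, Nuclear.conj hxy P P⟩

lemma BesselBound.summable_kraus {ι : Type*} {A : ι → H1 →L[ℂ] H2} {M : ℝ}
    (hA : BesselBound A M) {T : H1 →L[ℂ] H1} (hT : IsTraceClass T) :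
    Summable fun j => A j ∘L T ∘L adjoint (A j) := by
  obtain ⟨x, y, hxy⟩ := hT
  have h2 := (hA.summable_prod hxy.1).prod_symm
  refine Summable.of_norm_bounded h2.prod fun j => ?_
  exact Nuclear.norm_le (Nuclear.conj hxy (A j) (A j))

/-- The diagonal matrix elements of a nuclear operator sum to the same number in every Hilbert
basis. -/
lemma Nuclear.hasSum_inner {κ ι : Type*} {x y : κ → H} {T : H →L[ℂ] H} (h : Nuclear x y T)
    (b : HilbertBasis ι ℂ H) : HasSum (fun i => ⟪b i, T (b i)⟫) (∑' n, ⟪y n, x n⟫) := by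
  have hs : Summable fun p : κ × ι => ⟪y p.1, b p.2⟫ * ⟪b p.2, x p.1⟫ := by
    refine Summable.of_norm ?_
    have := (besselBound_orthonormal b.orthonormal).summable_prod h.1
    refine this.congr fun p => ?_
    simp [norm_inner_symm (y p.1), mul_comm]
  have h1 : ∀ n, HasSum (fun i => ⟪y n, b i⟫ * ⟪b i, x n⟫) ⟪y n, x n⟫ := fun n =>
    b.hasSum_inner_mul_inner _ _
  have h2 : ∀ i, HasSum (fun n => ⟪y n, b i⟫ * ⟪b i, x n⟫) ⟪b i, T (b i)⟫ := fun i => by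
    simpa [inner_smul_right] using (h.2 (b i)).mapL (innerSL ℂ (b i))
  have h3 := hs.hasSum.prod_fiberwise h1
  have h4 := hs.prod_symm.hasSum.prod_fiberwise h2
  rw [h3.tsum_eq]
  rw [show ∑' (b_1 : ι × κ), ⟪y b_1.swap.1, b b_1.swap.2⟫ * ⟪b b_1.swap.2, x b_1.swap.1⟫ = _ from
    (Equiv.prodComm ι κ).tsum_eq (fun p : κ × ι => ⟪y p.1, b p.2⟫ * ⟪b p.2, x p.1⟫)] at h4
  exact h4

lemma Nuclear.trace_eq {κ : Type*} {x y : κ → H} {T : H →L[ℂ] H} (h : Nuclear x y T) :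
    trace T = ∑' n, ⟪y n, x n⟫ := by
  obtain ⟨b, hb⟩ := (exists_hilbertBasis ℂ H).choose_spec
  rw [trace, ← (h.hasSum_inner b).tsum_eq, hb]

/-- Families with equal Gram matrices are related by a bounded operator: the isometry between the
closed spans, extended by zero on the orthogonal complement. -/
lemma exists_of_gram_eq {α : Type*} (u : α → H1) (u' : α → H2)
    (h : ∀ a b, ⟪u a, u b⟫ = ⟪u' a, u' b⟫) : ∃ C : H1 →L[ℂ] H2, ∀ a, C (u a) = u' a := by
  let V : Submodule ℂ H1 := (Submodule.span ℂ (Set.range u)).topologicalClosure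
  have hVc : IsClosed (V : Set H1) := Submodule.isClosed_topologicalClosure _
  have : CompleteSpace V := hVc.completeSpace_coe
  have hle : Submodule.span ℂ (Set.range u) ≤ V := Submodule.le_topologicalClosure _
  let e0 : (α →₀ ℂ) →ₗ[ℂ] H1 := Finsupp.linearCombination ℂ u
  let f : (α →₀ ℂ) →ₗ[ℂ] H2 := Finsupp.linearCombination ℂ u'
  have hr : ∀ z, e0 z ∈ Submodule.span ℂ (Set.range u) := fun z => by
    rw [← Finsupp.range_linearCombination]; exact ⟨z, rfl⟩
  let e : (α →₀ ℂ) →ₗ[ℂ] V := e0.codRestrict V fun z => hle (hr z)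
  have hd : DenseRange e := by
    rw [Metric.denseRange_iff]
    intro v r hr0
    have hv : (v : H1) ∈ closure (Submodule.span ℂ (Set.range u) : Set H1) := v.2
    obtain ⟨w, hw, hwr⟩ := Metric.mem_closure_iff.1 hv r hr0
    rw [SetLike.mem_coe, ← Finsupp.range_linearCombination] at hw
    obtain ⟨z, rfl⟩ := hw
    exact ⟨z, hwr⟩
  have hn : ∀ z, ‖f z‖ = ‖e z‖ := fun z => by
    have hi : ⟪f z, f z⟫ = ⟪e0 z, e0 z⟫ := by
      simp only [f, e0, Finsupp.linearCombination_apply, Finsupp.sum, sum_inner, inner_sum,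
        inner_smul_left, inner_smul_right, h]
    have h2 : ‖f z‖ ^ 2 = ‖e0 z‖ ^ 2 := by
      rw [inner_self_eq_norm_sq_to_K, inner_self_eq_norm_sq_to_K] at hi
      exact_mod_cast hi
    exact (pow_left_inj₀ (norm_nonneg _) (norm_nonneg _) two_ne_zero).1 h2
  refine ⟨f.extendOfNorm e ∘L V.orthogonalProjectionOnto, fun a => ?_⟩
  have hua : u a = (e (Finsupp.single a 1) : H1) := by simp [e, e0]
  rw [ContinuousLinearMap.comp_apply, hua, Submodule.orthogonalProjectionOnto_mem_subspace_eq_self,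
    LinearMap.extendOfNorm_eq hd ⟨1, fun z => by simp [hn z]⟩]
  simp [f]

end Aux

/-! ### Tensor products and uniqueness of complements -/

section Tensor

set_option linter.unusedSectionVars false

lemma isTraceClass_ketbra (h h' : H) : IsTraceClass (ketbra h h') := by
  refine ⟨fun n => if n = 0 then h else 0, fun _ => h', ?_, fun v => ?_⟩
  · refine summable_of_ne_finset_zero (s := {0}) fun n hn => ?_
    have : n ≠ 0 := by simpa using hn
    simp [this]
  · have := hasSum_single (f := fun n : ℕ => ⟪h', v⟫ • (if n = 0 then h else (0 : H))) 0
      (fun n hn => by simp [hn])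
    simpa [ketbra] using this

lemma nuclear_ketbra (h h' : H) :
    Nuclear (fun _ : Unit => h) (fun _ : Unit => h') (ketbra h h') := by
  refine ⟨(hasSum_fintype _).summable, fun v => ?_⟩
  simp [ketbra]

namespace TensorStruct

/-- The same tensor product with the two factors exchanged. -/
def swap (ts : TensorStruct K H W) : TensorStruct H K W where
  t y x := ts.t x y
  inner_t y y' x x' := by rw [ts.inner_t, mul_comm]
  dense_t := by
    have : {w : W | ∃ y x, w = ts.t x y} = {w : W | ∃ x y, w = ts.t x y} := by
      ext w; exact exists_comm
    rw [this]; exact ts.dense_t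

lemma norm_t (ts : TensorStruct K H W) (x : K) (y : H) : ‖ts.t x y‖ = ‖x‖ * ‖y‖ := by
  have h := ts.inner_t x x y y
  rw [inner_self_eq_norm_sq_to_K, inner_self_eq_norm_sq_to_K, inner_self_eq_norm_sq_to_K] at h
  have h2 : ‖ts.t x y‖ ^ 2 = (‖x‖ * ‖y‖) ^ 2 := by rw [mul_pow]; exact_mod_cast h
  exact (pow_left_inj₀ (norm_nonneg _) (by positivity) two_ne_zero).1 h2

lemma t_add (ts : TensorStruct K H W) (x : K) (y y' : H) :
    ts.t x (y + y') = ts.t x y + ts.t x y' := by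
  rw [← sub_eq_zero, ← inner_self_eq_zero (𝕜 := ℂ)]
  simp only [inner_sub_left, inner_sub_right, inner_add_left, inner_add_right, ts.inner_t]
  ring

lemma t_smul (ts : TensorStruct K H W) (x : K) (c : ℂ) (y : H) :
    ts.t x (c • y) = c • ts.t x y := by
  rw [← sub_eq_zero, ← inner_self_eq_zero (𝕜 := ℂ)]
  simp only [inner_sub_left, inner_sub_right, inner_smul_left, inner_smul_right, ts.inner_t]
  ring

/-- The bounded operator `y ↦ x ⊗ y`. -/
def left (ts : TensorStruct K H W) (x : K) : H →L[ℂ] W :=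
  LinearMap.mkContinuous
    { toFun := fun y => ts.t x y
      map_add' := ts.t_add x
      map_smul' := ts.t_smul x } ‖x‖ fun y => (ts.norm_t x y).le

/-- The bounded operator `x ↦ x ⊗ y`. -/
def right (ts : TensorStruct K H W) (y : H) : K →L[ℂ] W := ts.swap.left y

@[simp] lemma left_apply (ts : TensorStruct K H W) (x : K) (y : H) : ts.left x y = ts.t x y := rfl

@[simp] lemma right_apply (ts : TensorStruct K H W) (x : K) (y : H) :
    ts.right y x = ts.t x y := rfl

lemma adjoint_left_t (ts : TensorStruct K H W) (x x' : K) (y : H) :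
    adjoint (ts.left x) (ts.t x' y) = ⟪x, x'⟫ • y := by
  refine ext_inner_left ℂ fun z => ?_
  rw [adjoint_inner_right, left_apply, ts.inner_t, inner_smul_right]

lemma orthogonalFamily (ts : TensorStruct K H W) {ι : Type*} {f : ι → K} (hf : Orthonormal ℂ f) :
    OrthogonalFamily ℂ (fun _ : ι => H)
      (fun i => (⟨(ts.left (f i)).toLinearMap, fun y => by
        simpa [hf.1 i] using ts.norm_t (f i) y⟩ : H →ₗᵢ[ℂ] W)) := by
  intro i j hij y y'
  change ⟪ts.t (f i) y, ts.t (f j) y'⟫ = 0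
  rw [ts.inner_t, hf.2 hij, zero_mul]

/-- For an orthonormal family `f` in the first factor, `(y_i) ↦ Σ f_i ⊗ y_i` is an isometry. -/
lemma exists_isometry (ts : TensorStruct K H W) {ι : Type*} {f : ι → K} (hf : Orthonormal ℂ f) :
    ∃ V : lp (fun _ : ι => H) 2 →ₗᵢ[ℂ] W, ∀ y, HasSum (fun i => ts.t (f i) (y i)) (V y) :=
  ⟨(ts.orthogonalFamily hf).linearIsometry, fun y => (ts.orthogonalFamily hf).hasSum_linearIsometry y⟩

/-- The slice maps `w ↦ (⟨f_i| ⊗ 1) w` along an orthonormal family. -/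
lemma besselBound_slice (ts : TensorStruct K H W) {ι : Type*} {f : ι → K}
    (hf : Orthonormal ℂ f) : BesselBound (fun i => adjoint (ts.left (f i))) 1 := by
  classical
  let V := (ts.orthogonalFamily hf).linearIsometry
  refine ⟨zero_le_one, fun w s => ?_⟩
  have hV : ∀ i, (adjoint V.toContinuousLinearMap w : lp (fun _ : ι => H) 2) i
      = adjoint (ts.left (f i)) w := fun i => by
    refine ext_inner_left ℂ fun y => ?_
    refine (lp.inner_single_left (𝕜 := ℂ) (G := fun _ : ι => H) i y _).symm.trans ?_
    rw [adjoint_inner_right, adjoint_inner_right]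
    congr 1
    exact (ts.orthogonalFamily hf).linearIsometry_apply_single y
  have h1 := lp.sum_rpow_le_norm_rpow (p := 2) (by norm_num) (adjoint V.toContinuousLinearMap w) s
  simp only [hV, ENNReal.toReal_ofNat, Real.rpow_ofNat] at h1
  have h2 : ‖adjoint V.toContinuousLinearMap w‖ ≤ 1 * ‖w‖ := by
    refine le_of_opNorm_le _ ?_ w
    rw [LinearIsometryEquiv.norm_map]
    exact V.norm_toContinuousLinearMap_le
  rw [one_mul] at h2
  calc _ ≤ _ := h1
    _ ≤ 1 * ‖w‖ ^ 2 := by rw [one_mul]; gcongr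

end TensorStruct

/-- The partial trace of `A T A*`, computed from a nuclear decomposition of `T`; the right-hand side
does not involve the basis chosen for the partial trace. -/
lemma IsPartialTraceLeft.inner_eq {κ : Type*} {ts : TensorStruct H2 H3 W} {A : H1 →L[ℂ] W}
    {T : H1 →L[ℂ] H1} {P : H3 →L[ℂ] H3} (h : IsPartialTraceLeft ts (A ∘L T ∘L adjoint A) P)
    {x y : κ → H1} (hT : Nuclear x y T) (u v : H3) :
    ⟪u, P v⟫ = ∑' n, ⟪adjoint (ts.right v) (A (y n)), adjoint (ts.right u) (A (x n))⟫ := by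
  obtain ⟨ι, _, b, hb⟩ := h
  have h1 := Nuclear.hasSum_inner
    (T := adjoint (ts.right u) ∘L (A ∘L T ∘L adjoint A) ∘L (ts.right v))
    (x := fun n => adjoint (ts.right u) (A (x n))) (y := fun n => adjoint (ts.right v) (A (y n)))
    (by
      have := hT.conj (adjoint (ts.right u) ∘L A) (adjoint (ts.right v) ∘L A)
      simpa [adjoint_comp, ContinuousLinearMap.comp_assoc] using this) b
  refine (hb u v).unique (h1.congr_fun fun i => ?_)
  simp [adjoint_inner_right]

lemma IsComplementary.symm {Ψ : (H1 →L[ℂ] H1) → (H3 →L[ℂ] H3)}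
    {Φ : (H1 →L[ℂ] H1) → (H2 →L[ℂ] H2)} (h : IsComplementary Ψ Φ) : IsComplementary Φ Ψ := by
  obtain ⟨W, ts, A, hA⟩ := h
  exact ⟨W, ts.swap, A, fun T hT => ⟨(hA T hT).2, (hA T hT).1⟩⟩

/-- Any two complements of `Φ` are related by conjugation with a bounded operator. The slices
`(⟨z| ⊗ 1) A h` and `(⟨z| ⊗ 1) A' h` over the common output space have the same Gram matrix, since
this Gram matrix consists of the matrix elements of `Φ(|h⟩⟨h'|)`. -/
lemma IsComplementary.exists_conj {Ψ : (H1 →L[ℂ] H1) → (H3 →L[ℂ] H3)}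
    {Ψ' : (H1 →L[ℂ] H1) → (H4 →L[ℂ] H4)}
    {Φ : (H1 →L[ℂ] H1) → (H2 →L[ℂ] H2)} (h : IsComplementary Ψ Φ) (h' : IsComplementary Ψ' Φ) :
    ∃ C : H3 →L[ℂ] H4, ∀ T, IsTraceClass T → Ψ' T = C ∘L Ψ T ∘L adjoint C := by
  obtain ⟨W, ts, A, hA⟩ := h
  obtain ⟨W', ts', A', hA'⟩ := h'
  obtain ⟨C, hC⟩ := exists_of_gram_eq
    (fun p : H2 × H1 => adjoint (ts.left p.1) (A p.2))
    (fun p : H2 × H1 => adjoint (ts'.left p.1) (A' p.2)) (by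
      rintro ⟨z', h'⟩ ⟨z, h⟩
      have e1 := IsPartialTraceLeft.inner_eq (ts := ts.swap) (hA _ (isTraceClass_ketbra h h')).1
        (nuclear_ketbra h h') z z'
      have e2 := IsPartialTraceLeft.inner_eq (ts := ts'.swap) (hA' _ (isTraceClass_ketbra h h')).1
        (nuclear_ketbra h h') z z'
      rw [tsum_fintype, Fintype.sum_unique] at e1 e2
      exact e1.symm.trans e2)
  refine ⟨C, fun T hT => ?_⟩
  obtain ⟨x, y, hxy⟩ := hT.exists_nuclear
  have key : ∀ (u : H4) (g : H1),
      adjoint (ts'.right u) (A' g) = adjoint (ts.right (adjoint C u)) (A g) := fun u g => by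
    refine ext_inner_left ℂ fun z => ?_
    have := congrArg (fun w => ⟪u, w⟫) (hC (z, g))
    simp only [adjoint_inner_right, TensorStruct.left_apply] at this
    rw [adjoint_inner_right, adjoint_inner_right, TensorStruct.right_apply,
      TensorStruct.right_apply, ← this, ← adjoint_inner_left, ← TensorStruct.left_apply,
      adjoint_inner_right]
  ext v
  refine ext_inner_left ℂ fun u => ?_
  rw [(hA' T hT).2.inner_eq hxy]
  simp only [ContinuousLinearMap.comp_apply]
  rw [← adjoint_inner_left, (hA T hT).2.inner_eq hxy]
  simp only [key]

/-! ### Bases and tensor products of separable spaces -/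

lemma countable_of_orthonormal [SeparableSpace H] {s : Set H}
    (hs : Orthonormal ℂ ((↑) : s → H)) : s.Countable := by
  refine Set.PairwiseDisjoint.countable_of_isOpen (s := fun x : H => Metric.ball x (1 / 2)) ?_
    (fun _ _ => Metric.isOpen_ball) (fun x _ => ⟨x, by simp⟩)
  intro x hx y hy hxy
  refine Metric.ball_disjoint_ball ?_
  have h0 : ⟪x, y⟫ = 0 := hs.2 (i := ⟨x, hx⟩) (j := ⟨y, hy⟩) (by simpa using hxy)
  have h1 := norm_sub_sq (𝕜 := ℂ) x y
  have hx1 : ‖x‖ = 1 := hs.1 ⟨x, hx⟩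
  have hy1 : ‖y‖ = 1 := hs.1 ⟨y, hy⟩
  rw [hx1, hy1, h0, map_zero] at h1
  rw [dist_eq_norm]
  nlinarith [norm_nonneg (x - y)]

variable (H) in
lemma exists_countable_basis [SeparableSpace H] :
    ∃ (ι : Type) (_ : Countable ι), Nonempty (HilbertBasis ι ℂ H) := by
  obtain ⟨s, b, hb⟩ := exists_hilbertBasis ℂ H
  have hs : s.Countable := countable_of_orthonormal (hb ▸ b.orthonormal)
  have := hs.to_subtype
  obtain ⟨f, hf⟩ := exists_injective_nat s
  let e : Set.range f ≃ s := (Equiv.ofInjective f hf).symm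
  refine ⟨Set.range f, inferInstance, ⟨HilbertBasis.mk (v := b ∘ e)
    (b.orthonormal.comp _ e.injective) ?_⟩⟩
  rw [e.surjective.range_comp, b.dense_span]

lemma separableSpace_of_basis {ι : Type*} [Countable ι] (b : HilbertBasis ι ℂ H) :
    SeparableSpace H := by
  have h1 : IsSeparable ((Submodule.span ℂ (Set.range b) : Set H)) :=
    (Set.countable_range b).isSeparable.span
  have h2 := h1.closure
  rw [← Submodule.topologicalClosure_coe, b.dense_span] at h2
  exact isSeparable_univ_iff.1 h2

/-- The standard basis of `ℓ²(ι)`. -/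
def l2Basis (ι : Type*) : HilbertBasis ι ℂ (lp (fun _ : ι => ℂ) 2) :=
  HilbertBasis.ofRepr (LinearIsometryEquiv.refl ℂ _)

/-- `ℓ²(ι)` for countable `ι`, as a bundled separable Hilbert space. -/
def l2Sep (ι : Type) [Countable ι] : SepHilbert :=
  letI := separableSpace_of_basis (l2Basis ι)
  ⟨lp (fun _ : ι => ℂ) 2⟩

lemma hasSum_mul_prod {ι κ : Type*} {f : ι → ℂ} {g : κ → ℂ} {a b : ℂ} (hf : HasSum f a)
    (hg : HasSum g b) : HasSum (fun p : ι × κ => f p.1 * g p.2) (a * b) :=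
  hf.mul hg (summable_mul_of_summable_norm hf.summable.norm hg.summable.norm)

lemma exists_tensorStruct_of_basis {ι κ : Type} (b : HilbertBasis ι ℂ H)
    (c : HilbertBasis κ ℂ K) :
    Nonempty (TensorStruct H K (lp (fun _ : ι × κ => ℂ) 2)) := by
  classical
  have hsum : ∀ (x x' : H) (y y' : K), HasSum
      (fun p : ι × κ => ⟪x, b p.1⟫ * ⟪b p.1, x'⟫ * (⟪y, c p.2⟫ * ⟪c p.2, y'⟫))
      (⟪x, x'⟫ * ⟪y, y'⟫) := fun x x' y y' => by
    have h1 := b.hasSum_inner_mul_inner x x'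
    have h2 := c.hasSum_inner_mul_inner y y'
    have h3 := hasSum_mul_prod h1 h2
    exact h3
  have hmem : ∀ (x : H) (y : K), Memℓp (fun p : ι × κ => ⟪b p.1, x⟫ * ⟪c p.2, y⟫) 2 :=
    fun x y => by
      refine memℓp_gen ?_
      refine (hsum x x y y).summable.norm.congr fun p => ?_
      simp [norm_inner_symm x, norm_inner_symm y]
      ring
  let t : H → K → lp (fun _ : ι × κ => ℂ) 2 := fun x y =>
    ⟨fun p : ι × κ => ⟪b p.1, x⟫ * ⟪c p.2, y⟫, hmem x y⟩
  have ht : ∀ i k, t (b i) (c k) = lp.single 2 (i, k) 1 := fun i k => by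
    ext ⟨i', k'⟩
    rw [lp.single_apply]
    change ⟪b i', b i⟫ * ⟪c k', c k⟫ = _
    rw [orthonormal_iff_ite.1 b.orthonormal, orthonormal_iff_ite.1 c.orthonormal]
    by_cases h1 : i' = i <;> by_cases h2 : k' = k <;> simp [h1, h2]
  refine ⟨⟨t, fun x x' y y' => ?_, ?_⟩⟩
  · rw [lp.inner_eq_tsum, ← (hsum x x' y y').tsum_eq]
    refine tsum_congr fun p => ?_
    change ⟪⟪b p.1, x⟫ * ⟪c p.2, y⟫, ⟪b p.1, x'⟫ * ⟪c p.2, y'⟫⟫ = _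
    simp only [RCLike.inner_apply, map_mul, inner_conj_symm]
    ring
  · rw [eq_top_iff]
    intro f _
    refine (Submodule.isClosed_topologicalClosure _).mem_of_tendsto
      (lp.hasSum_single (p := 2) (by norm_num) f) (Filter.Eventually.of_forall fun s => ?_)
    refine Submodule.sum_mem _ fun p _ => Submodule.le_topologicalClosure _ ?_
    have : lp.single 2 p (f p) = f p • t (b p.1) (c p.2) := by
      rw [ht, ← lp.single_smul, smul_eq_mul, mul_one]
    rw [this]
    exact Submodule.smul_mem _ _ (Submodule.subset_span ⟨_, _, rfl⟩)

variable (H K) in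
lemma exists_tensorStruct [SeparableSpace H] [SeparableSpace K] :
    ∃ W : SepHilbert, Nonempty (TensorStruct H K W.carrier) := by
  obtain ⟨ι, _, ⟨b⟩⟩ := exists_countable_basis H
  obtain ⟨κ, _, ⟨c⟩⟩ := exists_countable_basis K
  exact ⟨l2Sep (ι × κ), exists_tensorStruct_of_basis b c⟩

end Tensor

/-! ### Separable operators and equality of Kraus maps -/

section Structure

set_option linter.unusedSectionVars false

lemma hasSum_inner_apply {ι : Type*} {F : ι → H1 →L[ℂ] H2} {P : H1 →L[ℂ] H2} (h : HasSum F P)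
    (u : H2) (v : H1) : HasSum (fun j => ⟪u, F j v⟫) ⟪u, P v⟫ :=
  (h.mapL (ContinuousLinearMap.apply ℂ H2 v)).mapL (innerSL ℂ u)

/-- A state is a countable sum of operators `|r_k⟩⟨r_k|`; take `r_k = √ρ b_k` for an orthonormal
basis `b`. -/
lemma IsState.exists_decomp [SeparableSpace H] {ρ : H →L[ℂ] H} (h : IsState ρ) :
    ∃ r : ℕ → H, HasSum (fun k => ‖r k‖ ^ 2) 1 ∧
      ∀ x y, HasSum (fun k => ⟪x, r k⟫ * ⟪r k, y⟫) ⟪x, ρ y⟫ := by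
  obtain ⟨-, hpos, htr⟩ := h
  obtain ⟨b, hb⟩ := (exists_hilbertBasis ℂ H).choose_spec
  have hcount : (exists_hilbertBasis ℂ H).choose.Countable :=
    countable_of_orthonormal (hb ▸ b.orthonormal)
  have := hcount.to_subtype
  obtain ⟨g, hg⟩ := exists_injective_nat (exists_hilbertBasis ℂ H).choose
  have hρ : 0 ≤ ρ := (nonneg_iff_isPositive ρ).2 hpos
  let R : H →L[ℂ] H := CFC.sqrt ρ
  have hRR : ∀ z, R (R z) = ρ z := fun z => by
    have := CFC.sqrt_mul_sqrt_self ρ hρ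
    exact congrArg (fun Q : H →L[ℂ] H => Q z) this
  have hRs : ∀ z w, ⟪R z, w⟫ = ⟪z, R w⟫ := fun z w => by
    have hsa : IsSelfAdjoint R := (CFC.sqrt_nonneg ρ).isSelfAdjoint
    have : adjoint R = R := hsa.adjoint_eq
    nth_rewrite 1 [← this]
    exact adjoint_inner_left _ _ _
  have hinner : ∀ i, ⟪b i, ρ (b i)⟫ = ((‖R (b i)‖ ^ 2 : ℝ) : ℂ) := fun i => by
    rw [← hRR, ← hRs, inner_self_eq_norm_sq_to_K]; simp
  have hsum : HasSum (fun i => ‖R (b i)‖ ^ 2) 1 := by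
    have h1 : ∑' i, ((‖R (b i)‖ ^ 2 : ℝ) : ℂ) = 1 := by
      rw [← htr, trace]
      refine tsum_congr fun i => ?_
      rw [← hinner, hb]
    have h2 : Summable fun i => ((‖R (b i)‖ ^ 2 : ℝ) : ℂ) := by
      by_contra hns
      rw [tsum_eq_zero_of_not_summable hns] at h1
      exact zero_ne_one h1
    have h3 := h2.hasSum
    rw [h1, ← Complex.ofReal_one] at h3
    exact Complex.hasSum_ofReal.1 h3
  refine ⟨Function.extend g (fun i => R (b i)) 0, ?_, fun x y => ?_⟩
  · rw [← hg.hasSum_iff]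
    · refine hsum.congr_fun fun i => ?_
      simp [hg.extend_apply]
    · intro n hn
      rw [Function.extend_apply' _ _ _ (by simpa using hn)]
      simp
  · rw [← hg.hasSum_iff]
    · have h1 := b.hasSum_inner_mul_inner (R x) (R y)
      rw [hRs, hRR] at h1
      refine h1.congr_fun fun i => ?_
      simp [hg.extend_apply, hRs]
    · intro n hn
      rw [Function.extend_apply' _ _ _ (by simpa using hn)]
      simp

set_option maxHeartbeats 1000000 in
/-- A countably decomposable separable operator is a countable sum of multiples of projections
onto product vectors `a_m ⊗ v_m`. -/
lemma CDSeparable.exists_decomp [SeparableSpace K] [SeparableSpace H] {ts : TensorStruct K H W}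
    {σ : W →L[ℂ] W} (h : CDSeparable ts σ) :
    ∃ (a : ℕ × ℕ × ℕ → K) (v : ℕ × ℕ × ℕ → H),
      Summable (fun m => ‖a m‖ ^ 2 * ‖v m‖ ^ 2) ∧
      ∀ x x' y y', HasSum (fun m => (⟪x, a m⟫ * ⟪a m, x'⟫) * (⟪y, v m⟫ * ⟪v m, y'⟫))
        ⟪ts.t x y, σ (ts.t x' y')⟫ := by
  obtain ⟨p, ρ1, ρ2, τ, hp, hps, h1, h2, hτ, hσ⟩ := h
  choose r1 hr1 hr1' using fun n => (h1 n).exists_decomp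
  choose r2 hr2 hr2' using fun n => (h2 n).exists_decomp
  let a : ℕ × ℕ × ℕ → K := fun m => ((√(p m.1) : ℝ) : ℂ) • r1 m.1 m.2.1
  let v : ℕ × ℕ × ℕ → H := fun m => r2 m.1 m.2.2
  have hna : ∀ m, ‖a m‖ ^ 2 = p m.1 * ‖r1 m.1 m.2.1‖ ^ 2 := fun m => by
    simp only [a]
    rw [norm_smul, mul_pow, Complex.norm_real, Real.norm_eq_abs, sq_abs, Real.sq_sqrt (hp _)]
  have hs : Summable (fun m => ‖a m‖ ^ 2 * ‖v m‖ ^ 2) := by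
    refine summable_prod_of_fiber_le (fun _ => by positivity) hps fun n s => ?_
    have h3 := HasSum.mul (hr1 n) (hr2 n) (Summable.mul_of_nonneg (hr1 n).summable
      (hr2 n).summable (fun _ => by positivity) (fun _ => by positivity))
    have h4 := sum_le_hasSum s (fun _ _ => mul_nonneg (hp n) (by positivity))
      (h3.mul_left (p n))
    rw [one_mul, mul_one] at h4
    refine le_trans (le_of_eq (Finset.sum_congr rfl fun q _ => ?_)) h4
    rw [hna]; ring
  refine ⟨a, v, hs, fun x x' y y' => ?_⟩
  have hs' : Summable (fun m => (⟪x, a m⟫ * ⟪a m, x'⟫) * (⟪y, v m⟫ * ⟪v m, y'⟫)) := by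
    refine Summable.of_norm_bounded (hs.mul_left (‖x‖ * ‖x'‖ * (‖y‖ * ‖y'‖))) fun m => ?_
    rw [norm_mul, norm_mul, norm_mul]
    calc _ ≤ (‖x‖ * ‖a m‖) * (‖a m‖ * ‖x'‖) * ((‖y‖ * ‖v m‖) * (‖v m‖ * ‖y'‖)) := by
          gcongr <;> exact norm_inner_le_norm _ _
      _ = _ := by ring
  have hfib : ∀ n, HasSum
      (fun q : ℕ × ℕ => (⟪x, a (n, q)⟫ * ⟪a (n, q), x'⟫) * (⟪y, v (n, q)⟫ * ⟪v (n, q), y'⟫))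
      ((p n : ℂ) * (⟪x, ρ1 n x'⟫ * ⟪y, ρ2 n y'⟫)) := fun n => by
    have h3 := (hasSum_mul_prod (hr1' n x x') (hr2' n y y')).mul_left (p n : ℂ)
    refine h3.congr_fun fun q => ?_
    have hpp : ((√(p n) : ℝ) : ℂ) * ((√(p n) : ℝ) : ℂ) = (p n : ℂ) := by
      rw [← Complex.ofReal_mul, Real.mul_self_sqrt (hp n)]
    simp only [a, v, inner_smul_left, inner_smul_right, Complex.conj_ofReal]
    linear_combination (⟪x, r1 n q.1⟫ * ⟪r1 n q.1, x'⟫ * (⟪y, r2 n q.2⟫ * ⟪r2 n q.2, y'⟫)) * hpp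
  have h5 := hs'.hasSum.prod_fiberwise hfib
  have h6 : HasSum (fun n => (p n : ℂ) * (⟪x, ρ1 n x'⟫ * ⟪y, ρ2 n y'⟫))
      ⟪ts.t x y, σ (ts.t x' y')⟫ := by
    have h7 := hasSum_inner_apply hσ (ts.t x y) (ts.t x' y')
    refine h7.congr_fun fun n => ?_
    rw [← hτ n x x' y y', ← inner_smul_right, smul_apply]
  rw [← h5.unique h6]
  exact hs'.hasSum

/-- The decomposition into product vectors `a_m ⊗ v_m` can be chosen with unit vectors `v_m`: discard
the terms with `v_m = 0` and move the norm of `v_m` to `a_m`. -/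
lemma CDSeparable.exists_unit_decomp [SeparableSpace K] [SeparableSpace H]
    {ts : TensorStruct K H W} {σ : W →L[ℂ] W} (h : CDSeparable ts σ) :
    ∃ (M : Type) (_ : Countable M) (a : M → K) (v : M → H), (∀ m, ‖v m‖ = 1) ∧
      Summable (fun m => ‖a m‖ ^ 2) ∧
      ∀ x x' y y', HasSum (fun m => (⟪x, a m⟫ * ⟪a m, x'⟫) * (⟪y, v m⟫ * ⟪v m, y'⟫))
        ⟪ts.t x y, σ (ts.t x' y')⟫ := by
  obtain ⟨a, v, hs, hav⟩ := h.exists_decomp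
  let S : Set (ℕ × ℕ × ℕ) := {m | v m ≠ 0}
  refine ⟨S, inferInstance, fun m => ((‖v m‖ : ℝ) : ℂ) • a m, fun m => ((‖v m‖⁻¹ : ℝ) : ℂ) • v m,
    fun m => ?_, ?_, fun x x' y y' => ?_⟩
  · have : ‖v m‖ ≠ 0 := norm_ne_zero_iff.2 m.2
    rw [norm_smul, Complex.norm_real, norm_inv, norm_norm, inv_mul_cancel₀ this]
  · refine (hs.subtype S).congr fun m => ?_
    simp only [Function.comp_apply, norm_smul, Complex.norm_real, norm_norm]
    ring
  · have h1 := hav x x' y y'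
    rw [← hasSum_subtype_iff_of_support_subset (s := S)] at h1
    · refine h1.congr_fun fun m => ?_
      have h0 : ((‖v m‖ : ℝ) : ℂ) ≠ 0 := by
        exact_mod_cast norm_ne_zero_iff.2 m.2
      simp only [Function.comp_apply, inner_smul_left, inner_smul_right, Complex.conj_ofReal,
        Complex.ofReal_inv, map_inv₀]
      field_simp
    · intro m hm hv
      exact hm (by simp [hv])

/-- The operator `Q = Σ_j A_j* |v⟩⟨u| A_j`, the value at `|v⟩⟨u|` of the dual of the Kraus map
of `A`. -/
lemma BesselBound.exists_form {ι : Type*} {A : ι → H1 →L[ℂ] H2} {M : ℝ} (hA : BesselBound A M)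
    (u v : H2) : ∃ Q : H1 →L[ℂ] H1,
      ∀ h h', HasSum (fun j => ⟪u, A j h⟫ * ⟪A j h', v⟫) ⟪h', Q h⟫ := by
  have hB : ∀ u : H2, BesselBound (fun j => innerSL ℂ u ∘L A j) (‖u‖ ^ 2 * M) := fun u => by
    refine ⟨mul_nonneg (by positivity) hA.1, fun x s => ?_⟩
    calc ∑ j ∈ s, ‖(innerSL ℂ u ∘L A j) x‖ ^ 2 ≤ ∑ j ∈ s, ‖u‖ ^ 2 * ‖A j x‖ ^ 2 := by
          gcongr with j hj
          rw [← mul_pow]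
          gcongr
          exact norm_inner_le_norm _ _
      _ ≤ ‖u‖ ^ 2 * (M * ‖x‖ ^ 2) := by
          rw [← Finset.mul_sum]
          gcongr
          exact hA.2 x s
      _ = _ := by ring
  obtain ⟨Ru, hRu⟩ := (hB u).exists_row
  obtain ⟨Rv, hRv⟩ := (hB v).exists_row
  refine ⟨adjoint Rv ∘L Ru, fun h h' => ?_⟩
  rw [ContinuousLinearMap.comp_apply, adjoint_inner_right]
  refine (lp.hasSum_inner (Rv h') (Ru h)).congr_fun fun j => ?_
  rw [hRu, hRv]
  simp

lemma HilbertBasis.clm_ext {ι : Type*} (e : HilbertBasis ι ℂ H) {Q Q' : H →L[ℂ] H}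
    (h : ∀ i k, ⟪e k, Q (e i)⟫ = ⟪e k, Q' (e i)⟫) : Q = Q' := by
  refine ContinuousLinearMap.ext_on (s := Set.range e) ?_ ?_
  · exact Submodule.dense_iff_topologicalClosure_eq_top.2 e.dense_span
  · rintro _ ⟨i, rfl⟩
    refine e.repr.injective (lp.ext (funext fun k => ?_))
    rw [e.repr_apply_apply, e.repr_apply_apply, h]

/-- Duality between the Kraus map of `A` and its dual: `⟨u| Σ_j A_j T A_j* |v⟩ = tr (Q T)`. -/
lemma BesselBound.hasSum_kraus_inner {ι κ : Type*} {A : ι → H1 →L[ℂ] H2} {M : ℝ}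
    (hA : BesselBound A M) {u v : H2} {Q : H1 →L[ℂ] H1}
    (hQ : ∀ h h', HasSum (fun j => ⟪u, A j h⟫ * ⟪A j h', v⟫) ⟪h', Q h⟫)
    {x y : κ → H1} {T : H1 →L[ℂ] H1} (hT : Nuclear x y T) :
    HasSum (fun j => ⟪u, (A j ∘L T ∘L adjoint (A j)) v⟫) (∑' n, ⟪y n, Q (x n)⟫) := by
  have hs : Summable fun p : κ × ι => ⟪u, A p.2 (x p.1)⟫ * ⟪A p.2 (y p.1), v⟫ := by
    refine Summable.of_norm_bounded ((hA.summable_prod hT.1).mul_left (‖u‖ * ‖v‖)) fun p => ?_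
    rw [norm_mul]
    calc _ ≤ (‖u‖ * ‖A p.2 (x p.1)‖) * (‖A p.2 (y p.1)‖ * ‖v‖) := by
          gcongr <;> exact norm_inner_le_norm _ _
      _ = _ := by ring
  have h1 := hs.hasSum.prod_fiberwise fun n => hQ (x n) (y n)
  have h2 : ∀ j, HasSum (fun n => ⟪u, A j (x n)⟫ * ⟪A j (y n), v⟫)
      ⟪u, (A j ∘L T ∘L adjoint (A j)) v⟫ := fun j => by
    have := ((hT.conj (A j) (A j)).2 v).mapL (innerSL ℂ u)
    refine this.congr_fun fun n => ?_
    simp [mul_comm]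
  have h3 := hs.prod_symm.hasSum.prod_fiberwise h2
  rw [h1.tsum_eq]
  rw [show ∑' (q : ι × κ), ⟪u, A q.swap.2 (x q.swap.1)⟫ * ⟪A q.swap.2 (y q.swap.1), v⟫ = _ from
    (Equiv.prodComm ι κ).tsum_eq
      (fun p : κ × ι => ⟪u, A p.2 (x p.1)⟫ * ⟪A p.2 (y p.1), v⟫)] at h3
  exact h3

/-- Kraus families whose maps agree on the matrix units `|e_i⟩⟨e_k|` give the same map on all
trace-class operators. -/
lemma BesselBound.hasSum_kraus_of_eq {ι κ α : Type*} {A : ι → H1 →L[ℂ] H2} {M : ℝ}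
    (hA : BesselBound A M) {B : κ → H1 →L[ℂ] H2} {N : ℝ} (hB : BesselBound B N)
    (e : HilbertBasis α ℂ H1)
    (hAB : ∀ i k u v, ∑' j, ⟪u, A j (e i)⟫ * ⟪A j (e k), v⟫
      = ∑' j, ⟪u, B j (e i)⟫ * ⟪B j (e k), v⟫)
    {T : H1 →L[ℂ] H1} (hT : IsTraceClass T) {P : H2 →L[ℂ] H2}
    (hP : HasSum (fun j => A j ∘L T ∘L adjoint (A j)) P) :
    HasSum (fun j => B j ∘L T ∘L adjoint (B j)) P := by
  have hs := hB.summable_kraus hT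
  convert hs.hasSum
  obtain ⟨x, y, hxy⟩ := hT.exists_nuclear
  ext v
  refine ext_inner_left ℂ fun u => ?_
  obtain ⟨QA, hQA⟩ := hA.exists_form u v
  obtain ⟨QB, hQB⟩ := hB.exists_form u v
  have hQ : QA = QB := HilbertBasis.clm_ext e fun i k => by
    rw [← (hQA (e i) (e k)).tsum_eq, ← (hQB (e i) (e k)).tsum_eq, hAB]
  have h1 := hA.hasSum_kraus_inner hQA hxy
  have h2 := hB.hasSum_kraus_inner hQB hxy
  have h3 : HasSum (fun j => ⟪u, (A j ∘L T ∘L adjoint (A j)) v⟫) ⟪u, P v⟫ :=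
    hasSum_inner_apply hP u v
  have h4 : HasSum (fun j => ⟪u, (B j ∘L T ∘L adjoint (B j)) v⟫)
      ⟪u, (∑' j, B j ∘L T ∘L adjoint (B j)) v⟫ :=
    hasSum_inner_apply hs.hasSum u v
  rw [h3.unique h1, h4.unique h2, hQ]

end Structure

/-! ### Amplifications and states of full Schmidt rank -/

section Amplification

set_option linter.unusedSectionVars false

/-- The operator `1 ⊗ A`, with its norm expressed through the slices along a basis of the first
factor. -/
lemma TensorStruct.exists_amplify (ts : TensorStruct K H1 W) (ts' : TensorStruct K H2 W')
    {ι : Type*} (f : HilbertBasis ι ℂ K) (A : H1 →L[ℂ] H2) :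
    ∃ L : W →L[ℂ] W', (∀ x y, L (ts.t x y) = ts'.t x (A y)) ∧
      ∀ w, HasSum (fun i => ‖A (adjoint (ts.left (f i)) w)‖ ^ 2) (‖L w‖ ^ 2) := by
  have hB : BesselBound (fun i => A ∘L adjoint (ts.left (f i))) (‖A‖ ^ 2) := by
    refine ⟨by positivity, fun w s => ?_⟩
    calc ∑ i ∈ s, ‖(A ∘L adjoint (ts.left (f i))) w‖ ^ 2
        ≤ ∑ i ∈ s, ‖A‖ ^ 2 * ‖adjoint (ts.left (f i)) w‖ ^ 2 := by
          gcongr with i hi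
          rw [← mul_pow]
          gcongr
          exact A.le_opNorm _
      _ ≤ ‖A‖ ^ 2 * ‖w‖ ^ 2 := by
          rw [← Finset.mul_sum]
          gcongr
          simpa using (ts.besselBound_slice f.orthonormal).2 w s
  obtain ⟨R, hR⟩ := hB.exists_row
  obtain ⟨V, hV⟩ := ts'.exists_isometry f.orthonormal
  refine ⟨V.toContinuousLinearMap ∘L R, fun x y => ?_, fun w => ?_⟩
  · have h1 := hV (R (ts.t x y))
    have h2 := (f.hasSum_repr x).mapL (ts'.right (A y))
    refine (h1.unique ?_)
    refine h2.congr_fun fun i => ?_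
    rw [hR, ContinuousLinearMap.comp_apply, ts.adjoint_left_t, map_smul, ts'.t_smul, map_smul,
      f.repr_apply_apply, TensorStruct.right_apply]
  · have h1 : ‖(V.toContinuousLinearMap ∘L R) w‖ = ‖R w‖ := V.norm_map _
    rw [h1]
    have h2 := lp.hasSum_norm (p := 2) (by norm_num) (R w)
    simp only [ENNReal.toReal_ofNat, Real.rpow_ofNat] at h2
    refine h2.congr_fun fun i => ?_
    rw [hR]
    rfl

lemma TensorStruct.besselBound_amplify (ts : TensorStruct K H1 W) {ι κ : Type*}
    (f : HilbertBasis ι ℂ K) {A : κ → H1 →L[ℂ] H2} {M : ℝ} (hA : BesselBound A M)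
    {L : κ → W →L[ℂ] W'}
    (hL : ∀ j w, HasSum (fun i => ‖A j (adjoint (ts.left (f i)) w)‖ ^ 2) (‖L j w‖ ^ 2)) :
    BesselBound L M := by
  refine ⟨hA.1, fun w s => ?_⟩
  have h1 := hasSum_sum (s := s) fun j _ => hL j w
  have hB := ts.besselBound_slice f.orthonormal
  have h2 := (hB.summable_sq w).mul_left M
  calc ∑ j ∈ s, ‖L j w‖ ^ 2 ≤ ∑' i, M * ‖adjoint (ts.left (f i)) w‖ ^ 2 :=
        hasSum_le (fun i => hA.2 _ s) h1 h2.hasSum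
    _ ≤ M * ‖w‖ ^ 2 := by
        rw [tsum_mul_left]
        have := hA.1
        gcongr
        refine (hB.summable_sq w).tsum_le_of_sum_le fun t => ?_
        simpa using hB.2 w t

/-- A countable nonempty type carries strictly positive square-summable weights of norm one. -/
lemma exists_weights (ι : Type*) [Countable ι] [Nonempty ι] :
    ∃ l : ι → ℝ, (∀ i, 0 < l i) ∧ HasSum (fun i => l i ^ 2) 1 := by
  have := Encodable.ofCountable ι
  obtain ⟨ε, hε, c, hc, -⟩ := posSumOfEncodable (ε := 1) one_pos ι
  have hcpos : 0 < c := by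
    obtain ⟨i⟩ := ‹Nonempty ι›
    exact (hε i).trans_le (le_hasSum hc i fun j _ => (hε j).le)
  refine ⟨fun i => √(ε i / c), fun i => Real.sqrt_pos.2 (div_pos (hε i) hcpos), ?_⟩
  have h1 := hc.div_const c
  rw [div_self hcpos.ne'] at h1
  refine h1.congr_fun fun i => ?_
  rw [Real.sq_sqrt (div_pos (hε i) hcpos).le]

/-- The unit vector `Σ_i l_i f_i ⊗ e_i`, of full Schmidt rank when `f` and `e` are bases and all
`l_i` are nonzero. -/
lemma TensorStruct.exists_vector (ts : TensorStruct K H1 W) {ι : Type*} {f : ι → K} {e : ι → H1}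
    (hf : Orthonormal ℂ f) (he : Orthonormal ℂ e) {l : ι → ℝ} (hl : HasSum (fun i => l i ^ 2) 1) :
    ∃ Ω : W, ‖Ω‖ = 1 ∧ HasSum (fun i => (l i : ℂ) • ts.t (f i) (e i)) Ω := by
  obtain ⟨V, hV⟩ := ts.exists_isometry hf
  have hn : ∀ i, ‖(l i : ℂ) • e i‖ ^ 2 = l i ^ 2 := fun i => by
    rw [norm_smul, he.1, mul_one, Complex.norm_real, Real.norm_eq_abs, sq_abs]
  have hmem : Memℓp (fun i => (l i : ℂ) • e i) 2 := by
    refine memℓp_gen ?_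
    simp only [ENNReal.toReal_ofNat, Real.rpow_ofNat, hn]
    exact hl.summable
  let z : lp (fun _ : ι => H1) 2 := ⟨fun i => (l i : ℂ) • e i, hmem⟩
  refine ⟨V z, ?_, (hV z).congr_fun fun i => (ts.t_smul _ _ _).symm⟩
  have h2 := lp.hasSum_norm (p := 2) (by norm_num) z
  simp only [ENNReal.toReal_ofNat, Real.rpow_ofNat] at h2
  have h3 := h2.unique (hl.congr_fun fun i => hn i)
  rw [V.norm_map]
  exact (pow_eq_one_iff_of_nonneg (norm_nonneg _) two_ne_zero).1 h3

lemma isState_ketbra {x : H} (hx : ‖x‖ = 1) : IsState (ketbra x x) := by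
  refine ⟨isTraceClass_ketbra x x, ?_, ?_⟩
  · rw [isPositive_iff_complex]
    intro y
    have h1 : ⟪ketbra x x y, y⟫ = ((‖⟪x, y⟫‖ ^ 2 : ℝ) : ℂ) := by
      simp only [ketbra, smulRight_apply, innerSL_apply_apply, inner_smul_left]
      rw [mul_comm]
      have := RCLike.mul_conj (K := ℂ) ⟪x, y⟫
      simpa using this
    rw [h1]
    exact ⟨rfl, sq_nonneg _⟩
  · rw [(nuclear_ketbra x x).trace_eq]
    simp [inner_self_eq_norm_sq_to_K, hx]

/-- The trace of `Σ_j |p_j⟩⟨q_j|`, computed in the basis `c`. -/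
lemma hasSum_inner_basis {ι κ : Type*} (c : HilbertBasis κ ℂ H) {p q : ι → H}
    (h : Summable fun j => ‖p j‖ * ‖q j‖) :
    HasSum (fun k => ∑' j, ⟪c k, p j⟫ * ⟪q j, c k⟫) (∑' j, ⟪q j, p j⟫) := by
  have hs : Summable fun r : ι × κ => ⟪c r.2, p r.1⟫ * ⟪q r.1, c r.2⟫ := by
    refine Summable.of_norm ?_
    have := (besselBound_orthonormal c.orthonormal).summable_prod h
    refine this.congr fun r => ?_
    simp [norm_inner_symm (q r.1)]
  have h1 : ∀ j, HasSum (fun k => ⟪c k, p j⟫ * ⟪q j, c k⟫) ⟪q j, p j⟫ := fun j => by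
    refine (c.hasSum_inner_mul_inner (q j) (p j)).congr_fun fun k => mul_comm _ _
  have h2 := hs.hasSum.prod_fiberwise h1
  rw [h2.tsum_eq, ← (Equiv.prodComm κ ι).tsum_eq]
  have h3 := hs.prod_symm
  exact h3.hasSum.prod_fiberwise fun k => (h3.prod_factor k).hasSum

end Amplification

/-! ### Measure-and-prepare form of strongly entanglement breaking operations -/

section MeasurePrepare

set_option linter.unusedSectionVars false

lemma ketbra_apply (x : H2) (y z : H1) : ketbra x y z = ⟪y, z⟫ • x := rfl

lemma adjoint_ketbra (x : H2) (y : H1) : adjoint (ketbra x y) = ketbra y x := by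
  refine ContinuousLinearMap.ext fun z => ext_inner_left ℂ fun u => ?_
  rw [adjoint_inner_right, ketbra_apply, ketbra_apply, inner_smul_left, inner_smul_right,
    inner_conj_symm, mul_comm]

lemma ketbra_conj (x : H2) (y : H1) (T : H1 →L[ℂ] H1) :
    ketbra x y ∘L T ∘L adjoint (ketbra x y) = ⟪y, T y⟫ • ketbra x x := by
  ext z
  rw [adjoint_ketbra]
  simp only [comp_apply, ketbra_apply, map_smul, smul_apply, smul_smul]
  rw [mul_comm]

lemma besselBound_ketbra {ι : Type*} {w : ι → H1} {v : ι → H2} {C : ℝ}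
    (hw : BesselBound (fun m => innerSL ℂ (w m)) C) (hv : ∀ m, ‖v m‖ = 1) :
    BesselBound (fun m => ketbra (v m) (w m)) C := by
  refine ⟨hw.1, fun x s => ?_⟩
  refine le_trans (le_of_eq (Finset.sum_congr rfl fun m _ => ?_)) (hw.2 x s)
  rw [ketbra_apply, norm_smul, hv, mul_one, innerSL_apply_apply]

/-- From a product decomposition of the Choi matrix of a Kraus family `A`, with first-factor
vectors `a m`, one obtains vectors `w m` with `⟪w m, e i⟫ = ⟪f i, a m⟫ / l i`: the column vectors
`(⟪f i, a m⟫ / l i)_m` have the same Gram matrix as the vectors `(A j (e i))_j`, so that they are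
the images of the `e i` under a bounded operator `H1 → ℓ²(M)`. -/
lemma BesselBound.exists_vectors {ι α M κ : Type*} {A : ι → H1 →L[ℂ] H2} {N : ℝ}
    (hA : BesselBound A N) (c : HilbertBasis κ ℂ H2) (e : α → H1) (f : α → K) (l : α → ℝ)
    (hl : ∀ i, 0 < l i) {a : M → K} {v : M → H2} (hv : ∀ m, ‖v m‖ = 1)
    (ha : Summable fun m => ‖a m‖ ^ 2)
    (hid : ∀ i k y y', ∑' m, (⟪f i, a m⟫ * ⟪a m, f k⟫) * (⟪y, v m⟫ * ⟪v m, y'⟫)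
      = (l i * l k : ℂ) * ∑' j, ⟪y, A j (e i)⟫ * ⟪A j (e k), y'⟫) :
    ∃ (w : M → H1) (C : ℝ), BesselBound (fun m => innerSL ℂ (w m)) C ∧
      ∀ m i, ⟪w m, e i⟫ = (l i : ℂ)⁻¹ * ⟪f i, a m⟫ := by
  have hl0 : ∀ i, (l i : ℂ) ≠ 0 := fun i => by exact_mod_cast (hl i).ne'
  obtain ⟨R, hR⟩ := hA.exists_row
  have hnorm : ∀ i m, ‖(l i : ℂ)⁻¹ * ⟪f i, a m⟫‖ ≤ (l i)⁻¹ * ‖f i‖ * ‖a m‖ := fun i m => by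
    rw [norm_mul, norm_inv, Complex.norm_real, Real.norm_of_nonneg (hl i).le, mul_assoc]
    have := (hl i).le
    gcongr
    exact norm_inner_le_norm _ _
  have hmem : ∀ i, Memℓp (fun m => (l i : ℂ)⁻¹ * ⟪f i, a m⟫) 2 := fun i => by
    refine memℓp_gen ?_
    simp only [ENNReal.toReal_ofNat, Real.rpow_ofNat]
    refine Summable.of_nonneg_of_le (fun _ => by positivity) (fun m => ?_)
      (ha.mul_left (((l i)⁻¹ * ‖f i‖) ^ 2))
    rw [← mul_pow]
    gcongr
    exact hnorm i m
  let g : α → lp (fun _ : M => ℂ) 2 := fun i => ⟨_, hmem i⟩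
  have hg : ∀ i m, g i m = (l i : ℂ)⁻¹ * ⟪f i, a m⟫ := fun _ _ => rfl
  -- Both Gram matrices are traces over `H2` of the two sides of `hid`.
  have hgram : ∀ k i, ⟪R (e k), R (e i)⟫ = ⟪g k, g i⟫ := fun k i => by
    have h1 : HasSum (fun q => ∑' j, ⟪c q, A j (e i)⟫ * ⟪A j (e k), c q⟫) ⟪R (e k), R (e i)⟫ := by
      rw [lp.inner_eq_tsum]
      simp only [hR]
      exact hasSum_inner_basis c
        (summable_of_sum_le (fun _ => by positivity) (hA.sum_mul_le (e i) (e k)))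
    have h2 := hasSum_inner_basis c (p := fun m => (g i m) • v m) (q := fun m => (g k m) • v m) (by
      refine Summable.of_nonneg_of_le (fun _ => by positivity) (fun m => ?_)
        (ha.mul_left (((l i)⁻¹ * ‖f i‖) * ((l k)⁻¹ * ‖f k‖)))
      rw [norm_smul, norm_smul, hv, mul_one, mul_one]
      calc ‖g i m‖ * ‖g k m‖ ≤ ((l i)⁻¹ * ‖f i‖ * ‖a m‖) * ((l k)⁻¹ * ‖f k‖ * ‖a m‖) := by
            have := (hl i).le
            gcongr
            · exact hnorm i m
            · exact hnorm k m
        _ = _ := by ring)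
    have h3 : ∑' m, ⟪g k m • v m, g i m • v m⟫ = ⟪g k, g i⟫ := by
      rw [lp.inner_eq_tsum]
      refine tsum_congr fun m => ?_
      rw [inner_smul_left, inner_smul_right, inner_self_eq_norm_sq_to_K, hv, RCLike.inner_apply]
      simp [mul_comm]
    rw [h3] at h2
    refine h1.unique (h2.congr_fun fun q => ?_)
    have h4 := hid i k (c q) (c q)
    have h5 : ∑' m, ⟪c q, g i m • v m⟫ * ⟪g k m • v m, c q⟫ = ((l i : ℂ)⁻¹ * (l k : ℂ)⁻¹) *
        ∑' m, (⟪f i, a m⟫ * ⟪a m, f k⟫) * (⟪c q, v m⟫ * ⟪v m, c q⟫) := by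
      rw [← tsum_mul_left]
      refine tsum_congr fun m => ?_
      rw [inner_smul_left, inner_smul_right, hg, hg, map_mul, map_inv₀, Complex.conj_ofReal,
        inner_conj_symm]
      ring
    rw [h5, h4]
    have := hl0 i
    have := hl0 k
    field_simp
  obtain ⟨D, hD⟩ := exists_of_gram_eq (fun i => R (e i)) g hgram
  let X : H1 →L[ℂ] lp (fun _ : M => ℂ) 2 := D ∘L R
  have hX : ∀ m h, ⟪adjoint X (l2Basis M m), h⟫ = X h m := fun m h => by
    rw [adjoint_inner_left, ← HilbertBasis.repr_apply_apply]
    rfl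
  refine ⟨fun m => adjoint X (l2Basis M m), ‖X‖ ^ 2, ⟨by positivity, fun h s => ?_⟩, fun m i => ?_⟩
  · have h1 := (besselBound_orthonormal (l2Basis M).orthonormal).2 (X h) s
    rw [one_mul] at h1
    calc _ = ∑ m ∈ s, ‖innerSL ℂ (l2Basis M m) (X h)‖ ^ 2 :=
          Finset.sum_congr rfl fun m _ => by
            rw [innerSL_apply_apply, innerSL_apply_apply, adjoint_inner_left]
      _ ≤ ‖X h‖ ^ 2 := h1
      _ ≤ (‖X‖ * ‖h‖) ^ 2 := by gcongr; exact X.le_opNorm h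
      _ = _ := mul_pow _ _ _
  · rw [hX]
    change D (R (e i)) m = _
    rw [hD, hg]

/-- A strongly entanglement breaking operation has the measure-and-prepare form
`Φ(T) = Σ_m ⟪w m, T (w m)⟫ |v m⟩⟨v m|` with unit vectors `v m` and `Σ_m |w m⟩⟨w m|` bounded. -/
lemma IsSEB.exists_structure [SeparableSpace H1] [SeparableSpace H2]
    {Φ : (H1 →L[ℂ] H1) → (H2 →L[ℂ] H2)} (hΦ : IsQuantumOperation Φ) (hSEB : IsSEB Φ) :
    ∃ (M : Type) (_ : Countable M) (v : M → H2) (w : M → H1) (C : ℝ), (∀ m, ‖v m‖ = 1) ∧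
      BesselBound (fun m => innerSL ℂ (w m)) C ∧
      ∀ T, IsTraceClass T → HasSum (fun m => ⟪w m, T (w m)⟫ • ketbra (v m) (v m)) (Φ T) := by
  obtain ⟨ι, _, ⟨e⟩⟩ := exists_countable_basis H1
  obtain ⟨κ, _, ⟨c⟩⟩ := exists_countable_basis H2
  obtain ⟨J, hJ, A, S, hS, hΦA⟩ := hΦ
  have hA := besselBound_of_hasSum hS
  rcases isEmpty_or_nonempty ι with hι | hι
  -- Without basis vectors `H1` is trivial and `Φ 0 = 0` is an empty sum.
  · refine ⟨Empty, inferInstance, Empty.elim, Empty.elim, 0, fun m => m.elim,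
      ⟨le_rfl, fun x s => by simp [Finset.eq_empty_of_isEmpty s]⟩, fun T hT => ?_⟩
    have hT0 : T = 0 := ContinuousLinearMap.ext fun x => by
      refine e.repr.injective (lp.ext (funext fun i => isEmptyElim i))
    have h1 := hΦA T hT
    simp only [hT0, zero_comp, comp_zero] at h1
    rw [hT0, h1.unique hasSum_zero]
    exact hasSum_empty
  obtain ⟨l, hl, hl1⟩ := exists_weights ι
  let K := l2Sep ι
  let f : HilbertBasis ι ℂ K.carrier := l2Basis ι
  obtain ⟨W, ⟨ts⟩⟩ := exists_tensorStruct K.carrier H1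
  obtain ⟨W', ⟨ts'⟩⟩ := exists_tensorStruct K.carrier H2
  choose L hLt hLn using fun j => ts.exists_amplify ts' f (A j)
  have hL := ts.besselBound_amplify f hA hLn
  obtain ⟨Ω, hΩ1, hΩ⟩ := ts.exists_vector f.orthonormal e.orthonormal hl1
  have hσ := (hL.summable_kraus (isTraceClass_ketbra Ω Ω)).hasSum
  obtain ⟨M, hM, a, v, hv, ha, hav⟩ := (hSEB K W W' ts ts' _ _ (isState_ketbra hΩ1)
    ⟨J, hJ, A, S, hS, hΦA, L, hLt, hσ⟩).exists_unit_decomp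
  -- `L j = 1 ⊗ A j` maps `Ω` to `Σ_i l i • f i ⊗ A j (e i)`.
  have hLΩ : ∀ i j y, ⟪ts'.t (f i) y, L j Ω⟫ = l i * ⟪y, A j (e i)⟫ := fun i j y => by
    have h1 := (hΩ.mapL (L j)).mapL (innerSL ℂ (ts'.t (f i) y))
    have h2 := hasSum_single (f := fun k => (innerSL ℂ (ts'.t (f i) y))
      (L j ((l k : ℂ) • ts.t (f k) (e k)))) i fun k hk => by
        rw [map_smul, hLt, map_smul, innerSL_apply_apply, ts'.inner_t, f.orthonormal.2 hk.symm,
          zero_mul, smul_zero]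
    rw [map_smul, hLt, map_smul, innerSL_apply_apply, ts'.inner_t,
      inner_self_eq_norm_sq_to_K, f.orthonormal.1] at h2
    simpa using h1.unique h2
  -- The two sides are `⟨f i ⊗ y| σ |f k ⊗ y'⟩`, once from the product decomposition of `σ`, once
  -- from its Kraus form.
  have hid : ∀ i k y y', ∑' m, (⟪f i, a m⟫ * ⟪a m, f k⟫) * (⟪y, v m⟫ * ⟪v m, y'⟫)
      = (l i * l k : ℂ) * ∑' j, ⟪y, A j (e i)⟫ * ⟪A j (e k), y'⟫ := fun i k y y' => by
    rw [(hav (f i) (f k) y y').tsum_eq,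
      ← (hasSum_inner_apply hσ (ts'.t (f i) y) (ts'.t (f k) y')).tsum_eq, ← tsum_mul_left]
    refine tsum_congr fun j => ?_
    simp only [comp_apply, ketbra_apply, map_smul, inner_smul_right, adjoint_inner_right, hLΩ]
    rw [← inner_conj_symm (L j Ω), hLΩ, map_mul, Complex.conj_ofReal, inner_conj_symm]
    ring
  obtain ⟨w, C, hw, hwe⟩ := hA.exists_vectors c e f l hl hv ha hid
  refine ⟨M, hM, v, w, C, hv, hw, fun T hT => ?_⟩
  have h1 := hA.hasSum_kraus_of_eq (besselBound_ketbra hw hv) e (fun i k u u' => by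
    have h3 : ∑' m, ⟪u, ketbra (v m) (w m) (e i)⟫ * ⟪ketbra (v m) (w m) (e k), u'⟫
        = ((l i : ℂ)⁻¹ * (l k : ℂ)⁻¹) *
        ∑' m, (⟪f i, a m⟫ * ⟪a m, f k⟫) * (⟪u, v m⟫ * ⟪v m, u'⟫) := by
      rw [← tsum_mul_left]
      refine tsum_congr fun m => ?_
      rw [ketbra_apply, ketbra_apply, inner_smul_left, inner_smul_right, hwe, hwe, map_mul,
        map_inv₀, Complex.conj_ofReal, inner_conj_symm]
      ring
    rw [h3, hid]
    have : (l i : ℂ) ≠ 0 := by exact_mod_cast (hl i).ne'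
    have : (l k : ℂ) ≠ 0 := by exact_mod_cast (hl k).ne'
    field_simp) hT (hΦA T hT)
  simpa only [ketbra_conj] using h1

end MeasurePrepare

/-! ### A complement that degrades to the operation -/

section Construction

set_option linter.unusedSectionVars false

lemma BesselBound.comp_right {ι : Type*} {B : ι → H2 →L[ℂ] H3} {M : ℝ} (hB : BesselBound B M)
    (P : H1 →L[ℂ] H2) : BesselBound (fun j => B j ∘L P) (M * ‖P‖ ^ 2) := by
  have hM := hB.1
  refine ⟨by positivity, fun x s => (hB.2 (P x) s).trans ?_⟩
  rw [mul_assoc, ← mul_pow]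
  gcongr
  exact P.le_opNorm x

lemma BesselBound.comp_left {ι : Type*} {B : ι → H1 →L[ℂ] H2} {M : ℝ} (hB : BesselBound B M)
    (D : H2 →L[ℂ] H3) : BesselBound (fun j => D ∘L B j) (‖D‖ ^ 2 * M) := by
  have hM := hB.1
  refine ⟨by positivity, fun x s => ?_⟩
  calc ∑ j ∈ s, ‖(D ∘L B j) x‖ ^ 2 ≤ ∑ j ∈ s, ‖D‖ ^ 2 * ‖B j x‖ ^ 2 := by
        gcongr with j hj
        rw [← mul_pow]
        gcongr
        exact D.le_opNorm _
    _ ≤ ‖D‖ ^ 2 * (M * ‖x‖ ^ 2) := by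
        rw [← Finset.mul_sum]
        gcongr
        exact hB.2 x s
    _ = _ := by ring

/-- The map `T ↦ Σ_j A_j T A_j*` with Kraus operators `A`; the value is meaningful only where the
sum converges in operator norm, as it does for trace-class `T` and Bessel-bounded `A`. -/
def krausMap {ι : Type*} (A : ι → H1 →L[ℂ] H2) (T : H1 →L[ℂ] H1) : H2 →L[ℂ] H2 :=
  ∑' j, A j ∘L T ∘L adjoint (A j)

lemma BesselBound.isQuantumOperation {ι : Type} [Countable ι] {A : ι → H1 →L[ℂ] H2} {M : ℝ}
    (hA : BesselBound A M) : IsQuantumOperation (krausMap A) := by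
  obtain ⟨S, hS⟩ := hA.exists_hasSum
  exact ⟨ι, inferInstance, A, S, hS, fun T hT => (hA.summable_kraus hT).hasSum⟩

/-- A measurement in an orthonormal basis `δ` followed by the preparation of the pure states
`v m` is a channel. -/
lemma isQuantumChannel_prepare {M : Type} [Countable M] (δ : HilbertBasis M ℂ H3) {v : M → H2}
    (hv : ∀ m, ‖v m‖ = 1) : IsQuantumChannel (krausMap fun m => ketbra (v m) (δ m)) := by
  have hG := besselBound_ketbra (besselBound_orthonormal δ.orthonormal) hv
  refine ⟨hG.isQuantumOperation, fun T hT => ?_⟩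
  have h1 := (hG.summable_kraus hT).hasSum
  simp only [ketbra_conj] at h1
  obtain ⟨x, y, hxy⟩ := hT.exists_nuclear
  have h2 := hxy.hasSum_inner δ
  have hN : Nuclear (fun m => ⟪δ m, T (δ m)⟫ • v m) v (krausMap (fun m => ketbra (v m) (δ m)) T) := by
    refine ⟨?_, fun z => ?_⟩
    · refine h2.summable.norm.congr fun m => ?_
      rw [norm_smul, hv, mul_one, mul_one]
    · simp only [krausMap, ketbra_conj]
      refine (h1.mapL (ContinuousLinearMap.apply ℂ H2 z)).congr_fun fun m => ?_
      simp only [apply_apply, smul_apply, ketbra_apply]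
      rw [smul_comm]
  rw [hN.trace_eq, hxy.trace_eq, ← h2.tsum_eq]
  refine tsum_congr fun m => ?_
  rw [inner_smul_right, inner_self_eq_norm_sq_to_K, hv]
  simp

/-- The Stinespring operator `h ↦ Σ_m ⟪w m, h⟫ v m ⊗ δ m`, described by its adjoint. -/
lemma TensorStruct.exists_dilation {M : Type*} (ts : TensorStruct H2 H3 W)
    (δ : HilbertBasis M ℂ H3) {v : M → H2} (hv : ∀ m, ‖v m‖ = 1) {w : M → H1} {C : ℝ}
    (hw : BesselBound (fun m => innerSL ℂ (w m)) C) :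
    ∃ A : H1 →L[ℂ] W, ∀ y m, adjoint A (ts.t y (δ m)) = ⟪v m, y⟫ • w m := by
  obtain ⟨R, hR⟩ := (besselBound_ketbra hw hv).exists_row
  obtain ⟨V, hV⟩ := ts.swap.exists_isometry δ.orthonormal
  refine ⟨V.toContinuousLinearMap ∘L R, fun y m => ext_inner_right ℂ fun h => ?_⟩
  rw [adjoint_inner_left]
  have h1 := (hV (R h)).mapL (innerSL ℂ (ts.t y (δ m)))
  have h2 := hasSum_single (f := fun k => (innerSL ℂ (ts.t y (δ m)))
      (ts.swap.t (δ k) (R h k))) m fun k hk => by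
        rw [innerSL_apply_apply]
        change ⟪ts.t y (δ m), ts.t (R h k) (δ k)⟫ = 0
        rw [ts.inner_t, δ.orthonormal.2 hk.symm, mul_zero]
  refine (h1.unique h2).trans ?_
  rw [innerSL_apply_apply]
  change ⟪ts.t y (δ m), ts.t (R h m) (δ m)⟫ = _
  rw [ts.inner_t, inner_self_eq_norm_sq_to_K, δ.orthonormal.1, hR, ketbra_apply, inner_smul_left,
    inner_smul_right, inner_conj_symm]
  simp [mul_comm]

/-- For `Φ(T) = Σ_m ⟪w m, T (w m)⟫ |v m⟩⟨v m|` there are a complement `Ψ` of `Φ` into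
`T(ℓ²(M))` and a Kraus family `G` of a channel with `G_m Ψ(T) G_m* = ⟪w m, T (w m)⟫ |v m⟩⟨v m|`
for each `m`. -/
lemma exists_complement [SeparableSpace H2] {M : Type} [Countable M]
    {Φ : (H1 →L[ℂ] H1) → (H2 →L[ℂ] H2)} {v : M → H2} (hv : ∀ m, ‖v m‖ = 1) {w : M → H1} {C : ℝ}
    (hw : BesselBound (fun m => innerSL ℂ (w m)) C)
    (hΦ : ∀ T, IsTraceClass T → HasSum (fun m => ⟪w m, T (w m)⟫ • ketbra (v m) (v m)) (Φ T)) :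
    ∃ (H3 : SepHilbert) (Ψ : (H1 →L[ℂ] H1) → (H3.carrier →L[ℂ] H3.carrier))
      (G : M → H3.carrier →L[ℂ] H2), IsQuantumOperation Ψ ∧ IsComplementary Ψ Φ ∧
      BesselBound G 1 ∧ IsQuantumChannel (krausMap G) ∧
      ∀ T, IsTraceClass T → ∀ m,
        G m ∘L Ψ T ∘L adjoint (G m) = ⟪w m, T (w m)⟫ • ketbra (v m) (v m) := by
  let H3 := l2Sep M
  let δ : HilbertBasis M ℂ H3.carrier := l2Basis M
  obtain ⟨W, ⟨ts⟩⟩ := exists_tensorStruct H2 H3.carrier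
  obtain ⟨κ, _, ⟨c⟩⟩ := exists_countable_basis H2
  obtain ⟨A, hA⟩ := ts.exists_dilation δ hv hw
  have hU := (ts.besselBound_slice c.orthonormal).comp_right A
  have hterm : ∀ (T : H1 →L[ℂ] H1) (x y : H2) (m : M),
      ⟪ts.t x (δ m), (A ∘L T ∘L adjoint A) (ts.t y (δ m))⟫
        = (⟪x, v m⟫ * ⟪v m, y⟫) * ⟪w m, T (w m)⟫ := fun T x y m => by
    rw [comp_apply, comp_apply, ← adjoint_inner_left, hA, hA, map_smul, inner_smul_left,
      inner_smul_right, inner_conj_symm]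
    ring
  have hleft : ∀ T, IsTraceClass T → ∀ x y, HasSum
      (fun k => ⟪ts.t (c k) x, (A ∘L T ∘L adjoint A) (ts.t (c k) y)⟫)
      ⟪x, krausMap (fun k => adjoint (ts.left (c k)) ∘L A) T y⟫ := fun T hT x y => by
    refine (hasSum_inner_apply (hU.summable_kraus hT).hasSum x y).congr_fun fun k => ?_
    simp only [adjoint_comp, adjoint_adjoint, comp_apply, adjoint_inner_right,
      TensorStruct.left_apply]
  refine ⟨H3, krausMap fun k => adjoint (ts.left (c k)) ∘L A, fun m => ketbra (v m) (δ m),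
    hU.isQuantumOperation, ⟨W, ts, A, fun T hT => ⟨⟨M, inferInstance, δ, fun x y => ?_⟩,
      ⟨κ, inferInstance, c, hleft T hT⟩⟩⟩,
    besselBound_ketbra (besselBound_orthonormal δ.orthonormal) hv,
    isQuantumChannel_prepare δ hv, fun T hT m => ?_⟩
  · refine (hasSum_inner_apply (hΦ T hT) x y).congr_fun fun m => ?_
    rw [hterm, smul_apply, ketbra_apply, inner_smul_right, inner_smul_right]
    ring
  · rw [ketbra_conj]
    congr 1
    have h1 := hleft T hT (δ m) (δ m)
    simp only [hterm] at h1
    have h2 := (c.hasSum_inner_mul_inner (v m) (v m)).mul_right ⟪w m, T (w m)⟫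
    rw [inner_self_eq_norm_sq_to_K, hv] at h2
    have h3 := h1.unique (h2.congr_fun fun k => by ring)
    simpa using h3

end Construction

/-- Every strongly entanglement breaking quantum operation
`Φ : T(H1) → T(H2)` is anti-degradable; in fact there exist a quantum operation `Ψ`
complementary to `Φ` and a quantum channel `Γ` with `Γ ∘ Ψ = Φ`, so that `Γ ∘ Ψ` is
complementary to `Ψ`, i.e. `Ψ` is degradable. -/
theorem SEB_antidegradable
    {H1 H2 : Type*}
    [NormedAddCommGroup H1] [InnerProductSpace ℂ H1] [CompleteSpace H1] [SeparableSpace H1]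
    [NormedAddCommGroup H2] [InnerProductSpace ℂ H2] [CompleteSpace H2] [SeparableSpace H2]
    (Φ : (H1 →L[ℂ] H1) → (H2 →L[ℂ] H2))
    (hΦ : IsQuantumOperation Φ) (hSEB : IsSEB Φ) :
    AntiDegradable Φ ∧
    ∃ (H3 : SepHilbert) (Ψ : (H1 →L[ℂ] H1) → (H3.carrier →L[ℂ] H3.carrier))
      (Γ : (H3.carrier →L[ℂ] H3.carrier) → (H2 →L[ℂ] H2)),
      IsQuantumOperation Ψ ∧ IsComplementary Ψ Φ ∧
      IsQuantumChannel Γ ∧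
      (∀ T, IsTraceClass T → Γ (Ψ T) = Φ T) ∧
      IsComplementary Φ Ψ ∧
      Degradable Ψ := by
  obtain ⟨M, _, v, w, C, hv, hw, hΦw⟩ := hSEB.exists_structure hΦ
  obtain ⟨H3, Ψ, G, hΨ, hΨΦ, hG, hΓ, hGΨ⟩ := exists_complement hv hw hΦw
  have hanti : AntiDegradable Φ := by
    intro K Ψ₁ _ hΨ₁Φ K' Ψ₂ _ hΨ₂
    -- `Ψ = P Ψ₁ P*` as both complement `Φ`, and `Ψ₂ = D Φ D*` as both complement `Ψ₁`.
    obtain ⟨P, hP⟩ := hΨ₁Φ.exists_conj hΨΦ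
    obtain ⟨D, hD⟩ := hΨ₁Φ.symm.exists_conj hΨ₂
    refine ⟨krausMap fun m => D ∘L G m ∘L P,
      ((hG.comp_right P).comp_left D).isQuantumOperation, fun T hT => ?_⟩
    have h1 := (hΦw T hT).mapL (((compL ℂ K'.carrier H2 K'.carrier) D) ∘L
      ((compL ℂ K'.carrier H2 H2).flip (adjoint D)))
    rw [hD T hT]
    refine Eq.trans (tsum_congr fun m => ?_) h1.tsum_eq
    change _ = D ∘L (⟪w m, T (w m)⟫ • ketbra (v m) (v m)) ∘L adjoint D
    rw [← hGΨ T hT m, hP T hT]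
    simp only [adjoint_comp, comp_assoc]
  refine ⟨hanti, H3, Ψ, krausMap G, hΨ, hΨΦ, hΓ, fun T hT => ?_, hΨΦ.symm, hanti H3 Ψ hΨ hΨΦ⟩
  rw [krausMap, tsum_congr (hGΨ T hT), (hΦw T hT).tsum_eq]

end PaperInf
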